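/- arXiv:1911.08809 — 2 statements merged into one kernel-verified Lean document; each statement's English description precedes it below -/
import Mathlib

section
/- In the distance-based mechanism, truthful value reporting weakly dominates value misreporting when the forwarded follower set is fixed: for every buyer i with true type θ_i = (v_i, r_i), every profile θ'_{-i} of reports of the other buyers, and every report θ'_i = (v'_i, r_i), it holds that v_i·f_i(θ_i, θ'_{-i}) − t_i(θ_i, θ'_{-i}) ≥ v_i·f_i(θ'_i, θ'_{-i}) − t_i(θ'_i, θ'_{-i}). -/
open scoped Classical NNReal ENNReal

namespace SNA

/-- A reported type `θ'_i = (v'_i, r'_i)`: a (nonnegative) value for one unit together with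
the set of followers to whom the buyer forwards the information. -/
abbrev Profile (N : Type*) := N → ℝ≥0 × Finset N

variable {N : Type*} [Fintype N] [DecidableEq N] [LinearOrder N]

/-- `reachIn θ rs m i`: in the digraph induced by the reported profile `θ` and the
seller's direct-buyer set `rs` (the seller links to every member of `rs`, and each buyer
`j` links to every member of `(θ j).2`), there is a directed path from the seller to `i`
using exactly `m + 1` edges. -/
def reachIn (θ : Profile N) (rs : Finset N) : ℕ → N → Prop
  | 0, i => i ∈ rs
  | m + 1, i => ∃ j, reachIn θ rs m j ∧ i ∈ (θ j).2

/-- Buyer `i` is connected: reachable from the seller. -/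
def Connected (θ : Profile N) (rs : Finset N) (i : N) : Prop :=
  ∃ m, reachIn θ rs m i

/-- `N̂`: the set of connected buyers. -/
noncomputable def Nhat (θ : Profile N) (rs : Finset N) : Finset N :=
  Finset.univ.filter (Connected θ rs)

/-- `d(i)`: the length of a shortest directed path from the seller to `i`
(`⊤` if `i` is not connected). -/
noncomputable def dNet (θ : Profile N) (rs : Finset N) (i : N) : ℕ∞ :=
  sInf {n : ℕ∞ | ∃ m : ℕ, reachIn θ rs m i ∧ n = (m : ℕ∞) + 1}

/-- Reachability from the seller by a directed path that avoids buyer `j`. -/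
def reachInAvoid (θ : Profile N) (rs : Finset N) (j : N) : ℕ → N → Prop
  | 0, i => i ∈ rs ∧ i ≠ j
  | m + 1, i => ∃ a, reachInAvoid θ rs j m a ∧ i ∈ (θ a).2 ∧ i ≠ j

/-- `j` is a critical parent of `i`: both are connected, `j ≠ i`, and every directed path
from the seller to `i` passes through `j`. -/
def CriticalParent (θ : Profile N) (rs : Finset N) (j i : N) : Prop :=
  Connected θ rs i ∧ Connected θ rs j ∧ j ≠ i ∧ ¬ ∃ m, reachInAvoid θ rs j m i

/-- The descendants of `i` in the diffusion critical tree `T(θ)`, i.e. `i` together with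
the connected buyers lying in the subtree of `T(θ)` rooted at `i`; the ancestors of a
buyer in the diffusion critical tree are exactly its critical parents. -/
noncomputable def desc (θ : Profile N) (rs : Finset N) (i : N) : Finset N :=
  Finset.univ.filter fun j => Connected θ rs j ∧ (j = i ∨ CriticalParent θ rs i j)

/-- `N̂₋ᵢ`: the connected buyers with `i` and all of its descendants in the diffusion
critical tree removed. -/
noncomputable def NhatMinus (θ : Profile N) (rs : Finset N) (i : N) : Finset N :=
  Nhat θ rs \ desc θ rs i

/-- The `k'`-th highest element of a multiset of values (as an element of `ℝ≥0∞`):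
`⊤` if `k' ≤ 0`, and `0` if the multiset has fewer than `k'` elements. -/
noncomputable def kthHighest (s : Multiset ℝ≥0) (k' : ℕ) : ℝ≥0∞ :=
  if k' = 0 then ⊤
  else if s.card < k' then 0
  else ((s.sort (· ≤ ·)).getD (s.card - k') 0 : ℝ≥0)

/-- `v*(S, k')`: the `k'`-th highest reported value among the buyers in `S`. -/
noncomputable def vstar (θ : Profile N) (S : Finset N) (k' : ℕ) : ℝ≥0∞ :=
  kthHighest (S.val.map fun i => (θ i).1) k'

/-- The priority order on the connected buyers: ascending order of the distance `d(·)`,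
with ties broken by the fixed linear order on `N` (mergeSort is stable). -/
noncomputable def prioList (θ : Profile N) (rs : Finset N) : List N :=
  ((Nhat θ rs).sort (· ≤ ·)).mergeSort fun i j => decide (dNet θ rs i ≤ dNet θ rs j)

/-- One run of the distance-based mechanism over a list of buyers (in priority order),
given the current winner set `W` and the remaining number of units `k'`; `extra` is an
additional pool of (dummy) values included in every price computation.
Buyer `i` faces the price `p = v*((N̂₋ᵢ ∖ W) + extra, k')` and wins (paying `p`)
iff her reported value is at least `p`. -/
noncomputable def runAux (θ : Profile N) (rs : Finset N) (extra : Multiset ℝ≥0) :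
    List N → Finset N → ℕ → (N → ℕ) × (N → ℝ≥0)
  | [], _, _ => (fun _ => 0, fun _ => 0)
  | i :: rest, W, k' =>
    let p : ℝ≥0∞ :=
      kthHighest (((NhatMinus θ rs i \ W).val.map fun j => (θ j).1) + extra) k'
    if (((θ i).1 : ℝ≥0∞)) ≥ p then
      let out := runAux θ rs extra rest (insert i W) (k' - 1)
      (Function.update out.1 i 1, Function.update out.2 i p.toNNReal)
    else
      let out := runAux θ rs extra rest W k'
      (Function.update out.1 i 0, Function.update out.2 i 0)

/-- The distance-based mechanism: `.1` is the allocation rule `f` (each buyer is mapped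
to `1` if she wins a unit and to `0` otherwise; unconnected buyers get `0`) and `.2` is
the payment rule `t` (unconnected buyers and losers pay `0`). -/
noncomputable def DBM (k : ℕ) (θ : Profile N) (rs : Finset N) : (N → ℕ) × (N → ℝ≥0) :=
  runAux θ rs 0 (prioList θ rs) ∅ k

/-- The distance-based mechanism with reserve price `vh`: `k` dummy buyers of value `vh`,
attached directly to the seller only (hence lying in every `N̂₋ᵢ` and never being
descendants of a real buyer), are added to every price pool, but they are never processed
as bidders and never win a unit. -/
noncomputable def DBMres (k : ℕ) (vh : ℝ≥0) (θ : Profile N) (rs : Finset N) :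
    (N → ℕ) × (N → ℝ≥0) :=
  runAux θ rs (Multiset.replicate k vh) (prioList θ rs) ∅ k

/-- The No-Diffusion-VCG mechanism: VCG applied to the direct buyers only. -/
noncomputable def NDVCG (k : ℕ) (θ : Profile N) (rs : Finset N) : (N → ℕ) × (N → ℝ≥0) :=
  (fun i => if i ∈ rs ∧ (((θ i).1 : ℝ≥0∞)) ≥ vstar θ (rs.erase i) k then 1 else 0,
   fun i => if i ∈ rs ∧ (((θ i).1 : ℝ≥0∞)) ≥ vstar θ (rs.erase i) k
     then (vstar θ (rs.erase i) k).toNNReal else 0)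

/-- The FCFS-F mechanism: the first `k` connected buyers in the priority order get a
unit for free. -/
noncomputable def FCFS (k : ℕ) (θ : Profile N) (rs : Finset N) : (N → ℕ) × (N → ℝ≥0) :=
  (fun i => if i ∈ (prioList θ rs).take k then 1 else 0, fun _ => 0)


theorem sorted_getD_le_iff (x : ℝ≥0) : ∀ (l : List ℝ≥0), l.Pairwise (· ≤ ·) → ∀ n, n < l.length →
    (l.getD n 0 ≤ x ↔ (l.filter (fun y => decide (x < y))).length < l.length - n) := by
  intro l
  induction l with
  | nil => intro _ n hn; simp at hn
  | cons a l ih =>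
    intro hp n hn
    rw [List.pairwise_cons] at hp
    have hle := List.length_filter_le (fun y => decide (x < y)) l
    cases n with
    | zero =>
      by_cases hax : x < a
      · have : l.filter (fun y => decide (x < y)) = l := by
          rw [List.filter_eq_self]
          intro y hy
          simpa using lt_of_lt_of_le hax (hp.1 y hy)
        rw [List.getD_cons_zero]
        simp [hax, this]
      · simp only [List.getD_cons_zero, List.filter_cons, hax, decide_false, List.length_cons]
        simp only [not_lt] at hax
        simp [hax]
        omega
    | succ n =>
      have hn' : n < l.length := by simpa using hn
      have := ih hp.2 n hn'
      rw [List.getD_cons_succ, this]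
      by_cases hax : x < a
      · have h2 : l.filter (fun y => decide (x < y)) = l := by
          rw [List.filter_eq_self]
          intro y hy
          simpa using lt_of_lt_of_le hax (hp.1 y hy)
        simp only [List.filter_cons, hax, decide_true, if_true, h2, List.length_cons]
        omega
      · simp only [List.filter_cons, hax, decide_false, List.length_cons]
        simp

theorem kthHighest_le_iff (s : Multiset ℝ≥0) (k' : ℕ) (x : ℝ≥0) :
    kthHighest s k' ≤ (x : ℝ≥0∞) ↔ (s.filter (fun y => x < y)).card < k' := by
  unfold kthHighest
  have hle : (s.filter (fun y => x < y)).card ≤ s.card :=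
    Multiset.card_le_card (Multiset.filter_le _ _)
  split_ifs with h1 h2
  · simp [h1]
  · simp; omega
  · rw [ENNReal.coe_le_coe]
    have hlen : (s.sort (· ≤ ·)).length = s.card := Multiset.length_sort _
    rw [sorted_getD_le_iff x _ (Multiset.pairwise_sort s (· ≤ ·)) _ (by omega)]
    have : (s.filter (fun y => x < y)).card
        = ((s.sort (· ≤ ·)).filter (fun y => decide (x < y))).length := by
      conv_lhs => rw [← Multiset.sort_eq s (· ≤ ·)]
      rw [Multiset.filter_coe, Multiset.coe_card]
    rw [this, hlen]
    omega

/-- Number of members of `W` with reported value at most `x`. -/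
noncomputable def lowCount (θ : Profile N) (W : Finset N) (x : ℝ≥0) : ℕ :=
  (W.filter (fun w => (θ w).1 ≤ x)).card

/-- Number of members of `P` with reported value above `x`. -/
noncomputable def highCount (θ : Profile N) (P : Finset N) (x : ℝ≥0) : ℕ :=
  (P.filter (fun w => x < (θ w).1)).card

theorem price_le_iff (θ : Profile N) (P W : Finset N) (k k' : ℕ) (hW : W ⊆ P)
    (hk : W.card + k' = k) (x : ℝ≥0) :
    kthHighest (((P \ W).val.map fun j => (θ j).1) + 0) k' ≤ (x : ℝ≥0∞) ↔
      highCount θ P x + lowCount θ W x < k := by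
  rw [add_zero, kthHighest_le_iff, Multiset.filter_map, Multiset.card_map]
  have h1 : (Multiset.filter ((fun y => x < y) ∘ fun j => (θ j).1) (P \ W).val).card
      = highCount θ (P \ W) x := rfl
  rw [h1]
  have h2 : highCount θ (P \ W) x + highCount θ W x = highCount θ P x := by
    unfold highCount
    rw [← Finset.card_union_of_disjoint, ← Finset.filter_union, Finset.sdiff_union_of_subset hW]
    exact Finset.disjoint_filter_filter Finset.sdiff_disjoint
  have h3 : lowCount θ W x + highCount θ W x = W.card := by
    unfold lowCount highCount
    have := Finset.card_filter_add_card_filter_not (s := W) (fun w => (θ w).1 ≤ x)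
    simpa only [not_le] using this
  omega

theorem reachIn_congr {θ θ' : Profile N} (rs : Finset N) (h : ∀ j, (θ j).2 = (θ' j).2) :
    reachIn θ rs = reachIn θ' rs := by
  funext m
  induction m with
  | zero => rfl
  | succ m ih => funext i; simp only [reachIn, ih, h]

theorem reachInAvoid_congr {θ θ' : Profile N} (rs : Finset N) (h : ∀ j, (θ j).2 = (θ' j).2)
    (j : N) : reachInAvoid θ rs j = reachInAvoid θ' rs j := by
  funext m
  induction m with
  | zero => rfl
  | succ m ih => funext i; simp only [reachInAvoid, ih, h]

theorem NhatMinus_congr {θ θ' : Profile N} (rs : Finset N) (h : ∀ j, (θ j).2 = (θ' j).2) :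
    NhatMinus θ rs = NhatMinus θ' rs := by
  have hN : Nhat θ rs = Nhat θ' rs := by
    ext i
    simp only [Nhat, Finset.mem_filter, Connected, reachIn_congr rs h]
  funext i
  have hD : desc θ rs i = desc θ' rs i := by
    ext j
    unfold desc
    rw [Finset.mem_filter, Finset.mem_filter]
    simp only [CriticalParent, Connected, reachIn_congr rs h, reachInAvoid_congr rs h]
  simp only [NhatMinus, hN, hD]

theorem prioList_congr {θ θ' : Profile N} (rs : Finset N) (h : ∀ j, (θ j).2 = (θ' j).2) :
    prioList θ rs = prioList θ' rs := by
  have hN : Nhat θ rs = Nhat θ' rs := by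
    ext i
    simp only [Nhat, Finset.mem_filter, Connected, reachIn_congr rs h]
  have hd : dNet θ rs = dNet θ' rs := by
    funext i
    simp only [dNet, reachIn_congr rs h]
  unfold prioList
  rw [hN, hd]

theorem reach_split (θ : Profile N) (rs : Finset N) (m : N) : ∀ (n : ℕ) (w : N),
    reachIn θ rs n w → reachInAvoid θ rs m n w ∨
      ∃ n', n' ≤ n ∧ reachIn θ rs n' m ∧ (n' = n → w = m) := by
  intro n
  induction n with
  | zero =>
    intro w hw
    by_cases h : w = m
    · right; exact ⟨0, le_rfl, h ▸ hw, fun _ => h⟩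
    · left; exact ⟨hw, h⟩
  | succ n ih =>
    intro w hw
    by_cases h : w = m
    · right; exact ⟨n + 1, le_rfl, h ▸ hw, fun _ => h⟩
    · obtain ⟨j, hj, hjw⟩ := hw
      rcases ih j hj with h1 | ⟨n', h1, h2, _⟩
      · left; exact ⟨j, h1, hjw, h⟩
      · right; exact ⟨n', by omega, h2, fun h => by omega⟩

theorem dNet_lt_of_critical (θ : Profile N) (rs : Finset N) (m w : N)
    (h : CriticalParent θ rs m w) : dNet θ rs m < dNet θ rs w := by
  obtain ⟨hw, hm, hne, hav⟩ := h
  have hmem : dNet θ rs w ∈ {n : ℕ∞ | ∃ m : ℕ, reachIn θ rs m w ∧ n = (m : ℕ∞) + 1} := by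
    apply csInf_mem
    obtain ⟨n, hn⟩ := hw
    exact ⟨_, n, hn, rfl⟩
  obtain ⟨n, hn, he⟩ := hmem
  rw [he]
  rcases reach_split θ rs m n w hn with h1 | ⟨n', h1, h2, h3⟩
  · exact absurd ⟨n, h1⟩ hav
  · have hlt : n' < n := lt_of_le_of_ne h1 (fun h => hne (h3 h).symm)
    have : dNet θ rs m ≤ (n' : ℕ∞) + 1 := sInf_le ⟨n', h2, rfl⟩
    refine lt_of_le_of_lt this ?_
    exact_mod_cast Nat.add_lt_add_right hlt 1

theorem prioList_mem (θ : Profile N) (rs : Finset N) (i : N) :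
    i ∈ prioList θ rs ↔ i ∈ Nhat θ rs := by
  simp [prioList]

theorem prioList_pairwise (θ : Profile N) (rs : Finset N) :
    (prioList θ rs).Pairwise (fun w m => w ∈ NhatMinus θ rs m) := by
  have h1 : (prioList θ rs).Pairwise (fun w m => decide (dNet θ rs w ≤ dNet θ rs m) = true) := by
    apply List.pairwise_mergeSort
    · intro a b c hab hbc
      simp only [decide_eq_true_eq] at *
      exact hab.trans hbc
    · intro a b
      simpa using le_total (dNet θ rs a) (dNet θ rs b)
  have h2 : (prioList θ rs).Nodup := by
    unfold prioList
    rw [(List.mergeSort_perm _ _).nodup_iff]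
    exact Finset.sort_nodup _ _
  refine (h1.and h2).imp_of_mem ?_
  rintro w m hw _ ⟨hd, hne⟩
  rw [prioList_mem] at hw
  simp only [decide_eq_true_eq] at hd
  simp only [NhatMinus, Finset.mem_sdiff, desc, Finset.mem_filter, Finset.mem_univ, true_and]
  refine ⟨hw, ?_⟩
  rintro ⟨_, h | h⟩
  · exact hne h
  · exact absurd (dNet_lt_of_critical θ rs m w h) (not_lt.mpr hd)

theorem not_mem_NhatMinus (θ : Profile N) (rs : Finset N) (m : N) : m ∉ NhatMinus θ rs m := by
  simp only [NhatMinus, Finset.mem_sdiff, desc, Finset.mem_filter, Finset.mem_univ, true_and,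
    Nhat]
  tauto

theorem runAux_not_mem (θ : Profile N) (rs : Finset N) (e : Multiset ℝ≥0) (i : N) :
    ∀ (l : List N) (W : Finset N) (k' : ℕ), i ∉ l →
      (runAux θ rs e l W k').1 i = 0 ∧ (runAux θ rs e l W k').2 i = 0 := by
  intro l
  induction l with
  | nil => intro W k' _; exact ⟨rfl, rfl⟩
  | cons m l ih =>
    intro W k' hi
    rw [List.mem_cons, not_or] at hi
    simp only [runAux]
    split_ifs
    · simpa [Function.update_of_ne hi.1] using ih _ _ hi.2
    · simpa [Function.update_of_ne hi.1] using ih _ _ hi.2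

/-- Outcome of buyer `i` when processed at the price `p`. -/
def OutcomeAt (θ : Profile N) (i : N) (out : (N → ℕ) × (N → ℝ≥0)) (p : ℝ≥0∞) : Prop :=
  (p ≤ ((θ i).1 : ℝ≥0∞) → out.1 i = 1 ∧ out.2 i = p.toNNReal) ∧
  (¬ p ≤ ((θ i).1 : ℝ≥0∞) → out.1 i = 0 ∧ out.2 i = 0)

theorem runAux_head (θ : Profile N) (rs : Finset N) (i : N) (l : List N) (W : Finset N)
    (k' : ℕ) : OutcomeAt θ i (runAux θ rs 0 (i :: l) W k')
      (kthHighest (((NhatMinus θ rs i \ W).val.map fun j => (θ j).1) + 0) k') := by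
  constructor
  · intro h
    simp only [runAux]
    rw [if_pos h]
    simp
  · intro h
    simp only [runAux]
    rw [if_neg h]
    simp

/-- One processing step for a buyer `m ≠ i`. -/
theorem runAux_step (θ : Profile N) (rs : Finset N) (i m : N) (hne : i ≠ m) (l : List N)
    (W : Finset N) (k k' : ℕ) (hW : W ⊆ NhatMinus θ rs m) (hk : W.card + k' = k) :
    ∃ (W' : Finset N) (k'' : ℕ), W'.card + k'' = k ∧
      (∀ p, OutcomeAt θ i (runAux θ rs 0 l W' k'') p →
        OutcomeAt θ i (runAux θ rs 0 (m :: l) W k') p) ∧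
      ((highCount θ (NhatMinus θ rs m) (θ m).1 + lowCount θ W (θ m).1 < k ∧ W' = insert m W) ∨
       (k ≤ highCount θ (NhatMinus θ rs m) (θ m).1 + lowCount θ W (θ m).1 ∧ W' = W)) := by
  have hiff := price_le_iff θ (NhatMinus θ rs m) W k k' hW hk (θ m).1
  have hmW : m ∉ W := fun h => not_mem_NhatMinus θ rs m (hW h)
  by_cases h : kthHighest (((NhatMinus θ rs m \ W).val.map fun j => (θ j).1) + 0) k'
      ≤ ((θ m).1 : ℝ≥0∞)
  · have hpos : k' ≠ 0 := by
      rintro rfl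
      simp [kthHighest] at h
    refine ⟨insert m W, k' - 1, ?_, ?_, Or.inl ⟨hiff.1 h, rfl⟩⟩
    · rw [Finset.card_insert_of_notMem hmW]; omega
    · intro p hp
      unfold OutcomeAt at *
      simp only [runAux]
      rw [if_pos h]
      simpa [Function.update_of_ne hne] using hp
  · refine ⟨W, k', hk, ?_, Or.inr ⟨not_lt.1 (fun h' => h (hiff.2 h')), rfl⟩⟩
    intro p hp
    unfold OutcomeAt at *
    simp only [runAux]
    rw [if_neg h]
    simpa [Function.update_of_ne hne] using hp

theorem lowCount_insert (θ : Profile N) (W : Finset N) (m : N) (hm : m ∉ W) (x : ℝ≥0) :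
    lowCount θ (insert m W) x = lowCount θ W x + (if (θ m).1 ≤ x then 1 else 0) := by
  unfold lowCount
  rw [Finset.filter_insert]
  split_ifs
  · rw [Finset.card_insert_of_notMem]
    simp [hm]
  · rfl

theorem run_compare (k : ℕ) (θ θ' : Profile N) (rs : Finset N) (i : N)
    (hr : ∀ j, (θ j).2 = (θ' j).2) (hv : ∀ j, j ≠ i → (θ j).1 = (θ' j).1) :
    ∀ (l : List N) (W W' : Finset N) (a a' : ℕ),
      i ∈ l → l.Pairwise (fun w m => w ∈ NhatMinus θ rs m) →
      (∀ m ∈ l, W ⊆ NhatMinus θ rs m) → (∀ m ∈ l, W' ⊆ NhatMinus θ rs m) →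
      W.card + a = k → W'.card + a' = k →
      (∀ y, y < (θ i).1 → y < (θ' i).1 → lowCount θ W y = lowCount θ' W' y) →
      (∀ y, y < (θ i).1 → y ≤ (θ' i).1 → lowCount θ W y ≤ lowCount θ' W' y) →
      ∃ p p' : ℝ≥0∞, OutcomeAt θ i (runAux θ rs 0 l W a) p ∧
        OutcomeAt θ' i (runAux θ' rs 0 l W' a') p' ∧
        ∀ x : ℝ≥0, x < (θ i).1 → x ≤ (θ' i).1 → p' ≤ (x : ℝ≥0∞) → p ≤ (x : ℝ≥0∞) := by
  have hM := NhatMinus_congr rs hr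
  intro l
  induction l with
  | nil => intro W W' a a' hi; simp at hi
  | cons m l ih =>
    intro W W' a a' hi hp hW hW' hk hk' h1 h2
    rw [List.pairwise_cons] at hp
    by_cases hne : i = m
    · subst hne
      refine ⟨_, _, runAux_head θ rs i l W a, runAux_head θ' rs i l W' a', ?_⟩
      intro x hx hx' hle
      rw [price_le_iff θ' _ _ k a' (hM ▸ hW' i (by simp)) hk'] at hle
      rw [price_le_iff θ _ _ k a (hW i (by simp)) hk]
      have := h2 x hx hx'
      have hC : highCount θ (NhatMinus θ rs i) x = highCount θ' (NhatMinus θ' rs i) x := by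
        unfold highCount
        rw [← hM]
        congr 1
        apply Finset.filter_congr
        intro w hw
        rw [hv w (fun h => not_mem_NhatMinus θ rs i (h ▸ hw))]
      omega
    · have hil : i ∈ l := by simpa [hne] using hi
      have hWm := hW m (by simp)
      have hWm' := hW' m (by simp)
      have hmW : m ∉ W := fun h => not_mem_NhatMinus θ rs m (hWm h)
      have hmW' : m ∉ W' := fun h => not_mem_NhatMinus θ rs m (hWm' h)
      obtain ⟨V, b, hb, ho, hc⟩ := runAux_step θ rs i m hne l W k a hWm hk
      obtain ⟨V', b', hb', ho', hc'⟩ := runAux_step θ' rs i m hne l W' k a' (hM ▸ hWm') hk'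
      have hm : (θ' m).1 = (θ m).1 := (hv m (Ne.symm hne)).symm
      rw [← hM, hm] at hc'
      have hCle : (θ m).1 < (θ i).1 → highCount θ' (NhatMinus θ rs m) (θ m).1
          ≤ highCount θ (NhatMinus θ rs m) (θ m).1 := by
        intro hlt
        apply Finset.card_le_card
        intro w hw
        rw [Finset.mem_filter] at hw ⊢
        refine ⟨hw.1, ?_⟩
        by_cases hwi : w = i
        · rw [hwi]; exact hlt
        · rw [hv w hwi]; exact hw.2
      have hCge : (θ m).1 < (θ' i).1 → highCount θ (NhatMinus θ rs m) (θ m).1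
          ≤ highCount θ' (NhatMinus θ rs m) (θ m).1 := by
        intro hlt
        apply Finset.card_le_card
        intro w hw
        rw [Finset.mem_filter] at hw ⊢
        refine ⟨hw.1, ?_⟩
        by_cases hwi : w = i
        · rw [hwi]; exact hlt
        · rw [← hv w hwi]; exact hw.2
      have hV : ∀ n ∈ l, V ⊆ NhatMinus θ rs n := by
        intro n hn
        have := hW n (by simp [hn])
        rcases hc with ⟨_, rfl⟩ | ⟨_, rfl⟩
        · exact Finset.insert_subset (hp.1 n hn) this
        · exact this
      have hV' : ∀ n ∈ l, V' ⊆ NhatMinus θ rs n := by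
        intro n hn
        have := hW' n (by simp [hn])
        rcases hc' with ⟨_, rfl⟩ | ⟨_, rfl⟩
        · exact Finset.insert_subset (hp.1 n hn) this
        · exact this
      have key1 : ∀ y, y < (θ i).1 → y < (θ' i).1 → lowCount θ V y = lowCount θ' V' y := by
        intro y hy hy'
        have e := h1 y hy hy'
        by_cases hmy : (θ m).1 ≤ y
        · have e2 := h1 (θ m).1 (hmy.trans_lt hy) (hmy.trans_lt hy')
          have c1 := hCle (hmy.trans_lt hy)
          have c2 := hCge (hmy.trans_lt hy')
          rcases hc with ⟨g, rfl⟩ | ⟨g, rfl⟩ <;> rcases hc' with ⟨g', rfl⟩ | ⟨g', rfl⟩ <;>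
            (try simp only [lowCount_insert _ _ m hmW, lowCount_insert _ _ m hmW', hm, hmy,
              if_true]) <;> omega
        · rcases hc with ⟨g, rfl⟩ | ⟨g, rfl⟩ <;> rcases hc' with ⟨g', rfl⟩ | ⟨g', rfl⟩ <;>
            (try simp only [lowCount_insert _ _ m hmW, lowCount_insert _ _ m hmW', hm, hmy,
              if_false]) <;> omega
      have key2 : ∀ y, y < (θ i).1 → y ≤ (θ' i).1 → lowCount θ V y ≤ lowCount θ' V' y := by
        intro y hy hy'
        rcases hy'.lt_or_eq with hlt | heq
        · exact (key1 y hy hlt).le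
        have e := h2 y hy hy'
        by_cases hmy : (θ m).1 ≤ y
        · have c1 := hCle (hmy.trans_lt hy)
          rcases hmy.lt_or_eq with hmlt | hmeq
          · have hmb := hmlt.trans_le hy'
            have e2 := h1 (θ m).1 (hmy.trans_lt hy) hmb
            have c2 := hCge hmb
            rcases hc with ⟨g, rfl⟩ | ⟨g, rfl⟩ <;> rcases hc' with ⟨g', rfl⟩ | ⟨g', rfl⟩ <;>
              (try simp only [lowCount_insert _ _ m hmW, lowCount_insert _ _ m hmW', hm, hmy,
                if_true]) <;> omega
          · rw [hmeq] at hc hc' c1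
            rcases hc with ⟨g, rfl⟩ | ⟨g, rfl⟩ <;> rcases hc' with ⟨g', rfl⟩ | ⟨g', rfl⟩ <;>
              (try simp only [lowCount_insert _ _ m hmW, lowCount_insert _ _ m hmW', hm, hmy,
                if_true]) <;> omega
        · rcases hc with ⟨g, rfl⟩ | ⟨g, rfl⟩ <;> rcases hc' with ⟨g', rfl⟩ | ⟨g', rfl⟩ <;>
            (try simp only [lowCount_insert _ _ m hmW, lowCount_insert _ _ m hmW', hm, hmy,
              if_false]) <;> omega
      obtain ⟨p, p', q, q', hpp⟩ := ih V V' b b' hil hp.2 hV hV' hb hb' key1 key2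
      exact ⟨p, p', ho p q, ho' p' q', hpp⟩

/-- **Lemma 2.** In the distance-based mechanism, truthful value reporting
weakly dominates value misreporting when the forwarded follower set is fixed: for every
buyer `i` with true type `θ i = (v_i, r_i)`, every profile of reports of the others, and
every report `(v', r_i)`, the truthful utility is at least the deviating utility. -/
theorem distanceBased_truthfulValue_dominates (k : ℕ) (θ : Profile N) (rs : Finset N)
    (i : N) (v' : ℝ≥0) :
    ((θ i).1 : ℝ) * ((DBM k θ rs).1 i : ℝ) - ((DBM k θ rs).2 i : ℝ) ≥
      ((θ i).1 : ℝ) * ((DBM k (Function.update θ i (v', (θ i).2)) rs).1 i : ℝ) -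
        ((DBM k (Function.update θ i (v', (θ i).2)) rs).2 i : ℝ) := by
  have hr : ∀ j, (θ j).2 = (Function.update θ i (v', (θ i).2) j).2 := by
    intro j
    by_cases h : j = i
    · subst h; simp
    · simp [Function.update_of_ne h]
  have hv : ∀ j, j ≠ i → (θ j).1 = (Function.update θ i (v', (θ i).2) j).1 := by
    intro j h
    simp [Function.update_of_ne h]
  have hi' : (Function.update θ i (v', (θ i).2) i).1 = v' := by simp
  generalize Function.update θ i (v', (θ i).2) = θ' at hr hv hi' ⊢
  unfold DBM
  rw [← prioList_congr rs hr]
  by_cases hmem : i ∈ prioList θ rs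
  · obtain ⟨p, p', ho, ho', hpp⟩ := run_compare k θ θ' rs i hr hv (prioList θ rs) ∅ ∅ k k hmem
      (prioList_pairwise θ rs) (by simp) (by simp) (by simp) (by simp)
      (by simp [lowCount]) (by simp [lowCount])
    generalize runAux θ rs 0 (prioList θ rs) ∅ k = out at ho
    generalize runAux θ' rs 0 (prioList θ rs) ∅ k = out' at ho'
    unfold OutcomeAt at ho ho'
    have hnn : ((θ i).1 : ℝ) * (out.1 i : ℝ) - (out.2 i : ℝ) ≥ 0 := by
      by_cases h : p ≤ ((θ i).1 : ℝ≥0∞)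
      · obtain ⟨e1, e2⟩ := ho.1 h
        lift p to ℝ≥0 using ne_top_of_le_ne_top ENNReal.coe_ne_top h
        rw [e1, e2]
        rw [ENNReal.coe_le_coe] at h
        have : (p : ℝ) ≤ ((θ i).1 : ℝ) := by exact_mod_cast h
        simp
        exact h
      · obtain ⟨e1, e2⟩ := ho.2 h
        simp [e1, e2]
    by_cases h' : p' ≤ ((θ' i).1 : ℝ≥0∞)
    · obtain ⟨e1', e2'⟩ := ho'.1 h'
      lift p' to ℝ≥0 using ne_top_of_le_ne_top ENNReal.coe_ne_top h'
      rw [e1', e2']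
      by_cases hlt : p' < (θ i).1
      · have hp := hpp p' hlt (ENNReal.coe_le_coe.1 h') le_rfl
        have hpv : p ≤ ((θ i).1 : ℝ≥0∞) := hp.trans (ENNReal.coe_le_coe.2 hlt.le)
        obtain ⟨e1, e2⟩ := ho.1 hpv
        lift p to ℝ≥0 using ne_top_of_le_ne_top ENNReal.coe_ne_top hpv
        rw [e1, e2]
        have : (p : ℝ) ≤ (p' : ℝ) := by exact_mod_cast ENNReal.coe_le_coe.1 hp
        simp only [ENNReal.toNNReal_coe]
        linarith
      · have : ((θ i).1 : ℝ) ≤ (p' : ℝ) := by exact_mod_cast not_lt.1 hlt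
        refine le_trans ?_ hnn
        simp only [ENNReal.toNNReal_coe, Nat.cast_one]
        linarith
    · obtain ⟨e1', e2'⟩ := ho'.2 h'
      rw [e1', e2']
      simpa using hnn
  · obtain ⟨e1, e2⟩ := runAux_not_mem θ rs 0 i (prioList θ rs) ∅ k hmem
    obtain ⟨e1', e2'⟩ := runAux_not_mem θ' rs 0 i (prioList θ rs) ∅ k hmem
    rw [e1, e2, e1', e2']

end SNA
end

section
/- In the distance-based mechanism with reserve price v_h, if all buyers report truthfully (true values and full forwarding), then exactly min(ℓ, k) units are allocated, where ℓ = #{i ∈ N̂ : v_i ≥ v_h} is the number of connected buyers whose value is at least v_h. -/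
open scoped Classical NNReal ENNReal

namespace SNA

variable {N : Type*} [Fintype N] [DecidableEq N] [LinearOrder N]

theorem le_kthHighest (s : Multiset ℝ≥0) (k' : ℕ) (v : ℝ≥0)
    (h : k' ≤ s.countP (fun x => v ≤ x)) : (v : ℝ≥0∞) ≤ kthHighest s k' := by
  unfold kthHighest
  split_ifs with h0 h1
  · exact le_top
  · have := Multiset.countP_le_card (fun x => v ≤ x) s
    omega
  · by_contra hlt
    rw [not_le, ENNReal.coe_lt_coe] at hlt
    have hp := Multiset.pairwise_sort s (· ≤ ·)
    have hl := Multiset.length_sort (s := s) (· ≤ ·)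
    have he := Multiset.sort_eq s (· ≤ ·)
    generalize hL : s.sort (· ≤ ·) = L at *
    have hn : s.card - k' < L.length := by omega
    rw [List.getD_eq_getElem _ _ hn] at hlt
    rw [← he, Multiset.coe_countP, ← List.take_append_drop (s.card - k' + 1) L,
      List.countP_append] at h
    have hz : List.countP (fun x => decide (v ≤ x)) (L.take (s.card - k' + 1)) = 0 := by
      rw [List.countP_eq_zero]
      intro a ha
      rw [List.mem_take_iff_getElem] at ha
      obtain ⟨j, hj, rfl⟩ := ha
      simp only [decide_eq_true_eq, not_le]
      refine lt_of_le_of_lt ?_ hlt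
      rcases Nat.lt_or_ge j (s.card - k') with hj' | hj'
      · exact List.pairwise_iff_getElem.1 hp _ _ _ _ hj'
      · have : j = s.card - k' := by omega
        subst this
        exact le_rfl
    have hd := List.countP_le_length (p := fun x => decide (v ≤ x))
      (l := L.drop (s.card - k' + 1))
    rw [List.length_drop] at hd
    rw [hz] at h
    omega

theorem le_countP_of_lt_kthHighest (s : Multiset ℝ≥0) (k' : ℕ) (v : ℝ≥0) (hk : k' ≠ 0)
    (h : (v : ℝ≥0∞) < kthHighest s k') : k' ≤ s.countP (fun x => v < x) := by
  unfold kthHighest at h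
  rw [if_neg hk] at h
  split_ifs at h with h1
  · simp at h
  · rw [ENNReal.coe_lt_coe] at h
    have hp := Multiset.pairwise_sort s (· ≤ ·)
    have hl := Multiset.length_sort (s := s) (· ≤ ·)
    have he := Multiset.sort_eq s (· ≤ ·)
    generalize hL : s.sort (· ≤ ·) = L at *
    have hn : s.card - k' < L.length := by omega
    rw [List.getD_eq_getElem _ _ hn] at h
    rw [← he, Multiset.coe_countP, ← List.take_append_drop (s.card - k') L,
      List.countP_append]
    have hz : List.countP (fun x => decide (v < x)) (L.drop (s.card - k'))
        = (L.drop (s.card - k')).length := by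
      rw [List.countP_eq_length]
      intro a ha
      rw [List.mem_drop_iff_getElem] at ha
      obtain ⟨j, hj, rfl⟩ := ha
      simp only [decide_eq_true_eq]
      refine lt_of_lt_of_le h ?_
      rcases Nat.eq_zero_or_pos j with hj' | hj'
      · subst hj'
        simp
      · exact List.pairwise_iff_getElem.1 hp _ _ _ _ (by omega)
    rw [hz, List.length_drop]
    omega

theorem runAux_spec (k : ℕ) (vh : ℝ≥0) (θ : Profile N) (rs : Finset N) (l : List N) :
    ∀ (W : Finset N) (k' : ℕ), l.Nodup → (∀ i ∈ l, i ∉ W) → k' ≤ k →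
    ∃ F : Finset N,
      (∀ j ∈ F, (runAux θ rs (Multiset.replicate k vh) l W k').1 j = 1) ∧
      (∀ j ∉ F, (runAux θ rs (Multiset.replicate k vh) l W k').1 j = 0) ∧
      (∀ j ∈ F, j ∈ l ∧ vh ≤ (θ j).1) ∧ F.card ≤ k' ∧
      (∀ i ∈ l, i ∉ F → vh ≤ (θ i).1 → ∃ W1 S : Finset N,
        (∀ j ∈ W, j ∈ W1) ∧ (∀ j ∈ W1, j ∈ W ∨ j ∈ F) ∧
        (∀ j ∈ S, j ∈ Nhat θ rs ∧ j ∉ W1 ∧ (θ i).1 < (θ j).1) ∧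
        k' + W.card ≤ S.card + W1.card) := by
  induction l with
  | nil =>
    intro W k' _ _ _
    exact ⟨∅, by simp [runAux]⟩
  | cons i rest ih =>
    intro W k' hnd hW hk
    rw [List.nodup_cons] at hnd
    have hiW : i ∉ W := hW i (by simp)
    simp only [runAux]
    by_cases hc : ((θ i).1 : ℝ≥0∞) ≥ kthHighest (((NhatMinus θ rs i \ W).val.map
        fun j => (θ j).1) + Multiset.replicate k vh) k'
    · simp only [if_pos hc]
      have hk0 : k' ≠ 0 := by
        rintro rfl
        simp [kthHighest] at hc
      have hvh : vh ≤ (θ i).1 := by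
        rw [← ENNReal.coe_le_coe]
        refine le_trans (le_kthHighest _ k' vh ?_) hc
        rw [Multiset.countP_add]
        have : Multiset.countP (fun x => vh ≤ x) (Multiset.replicate k vh) = k := by
          have := (Multiset.countP_eq_card (p := fun x => vh ≤ x)
            (s := Multiset.replicate k vh)).2
            (fun a ha => (Multiset.eq_of_mem_replicate ha).ge)
          simpa using this
        omega
      obtain ⟨F, h1, h2, h3, h4, h5⟩ := ih (insert i W) (k' - 1) hnd.2 (by
        intro j hj hjW
        rcases Finset.mem_insert.1 hjW with rfl | hj'
        · exact hnd.1 hj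
        · exact hW j (by simp [hj]) hj') (by omega)
      have hiF : i ∉ F := fun h => hnd.1 (h3 i h).1
      refine ⟨insert i F, ?_, ?_, ?_, ?_, ?_⟩
      · intro j hj
        by_cases hji : j = i
        · subst hji
          simp
        · rw [Function.update_of_ne hji]
          exact h1 j (by simpa [hji] using hj)
      · intro j hj
        simp only [Finset.mem_insert, not_or] at hj
        rw [Function.update_of_ne hj.1]
        exact h2 j hj.2
      · intro j hj
        rcases Finset.mem_insert.1 hj with rfl | hj'
        · exact ⟨by simp, hvh⟩
        · exact ⟨by simp [(h3 j hj').1], (h3 j hj').2⟩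
      · rw [Finset.card_insert_of_notMem hiF]
        omega
      · intro j hj hjF hjv
        simp only [Finset.mem_insert, not_or] at hjF
        obtain ⟨W1, S, a1, a2, a3, a4⟩ := h5 j (by simpa [hjF.1] using hj) hjF.2 hjv
        rw [Finset.card_insert_of_notMem hiW] at a4
        refine ⟨W1, S, fun x hx => a1 x (by simp [hx]), ?_, a3, by omega⟩
        intro x hx
        have := a2 x hx
        simp only [Finset.mem_insert] at this ⊢
        tauto
    · simp only [if_neg hc]
      obtain ⟨F, h1, h2, h3, h4, h5⟩ := ih W k' hnd.2
        (fun j hj => hW j (by simp [hj])) hk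
      have hiF : i ∉ F := fun h => hnd.1 (h3 i h).1
      refine ⟨F, ?_, ?_, ?_, h4, ?_⟩
      · intro j hj
        rw [Function.update_of_ne (by rintro rfl; exact hiF hj)]
        exact h1 j hj
      · intro j hj
        by_cases hji : j = i
        · subst hji
          simp
        · rw [Function.update_of_ne hji]
          exact h2 j hj
      · intro j hj
        exact ⟨by simp [(h3 j hj).1], (h3 j hj).2⟩
      · intro j hj hjF hjv
        by_cases hji : j = i
        · subst hji
          by_cases hk0 : k' = 0
          · exact ⟨W, ∅, fun x hx => hx, fun x hx => Or.inl hx, by simp, by simp [hk0]⟩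
          · have hcount := le_countP_of_lt_kthHighest _ k' (θ j).1 hk0 (not_le.1 hc)
            rw [Multiset.countP_add] at hcount
            have hz : Multiset.countP (fun x => (θ j).1 < x) (Multiset.replicate k vh) = 0 := by
              rw [Multiset.countP_eq_zero]
              intro a ha
              rw [Multiset.eq_of_mem_replicate ha]
              exact not_lt.2 hjv
            rw [hz, Multiset.countP_map] at hcount
            refine ⟨W, (NhatMinus θ rs j \ W).filter (fun x => (θ j).1 < (θ x).1),
              fun x hx => hx, fun x hx => Or.inl hx, ?_, ?_⟩
            · intro x hx
              simp only [Finset.mem_filter, Finset.mem_sdiff, NhatMinus] at hx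
              exact ⟨hx.1.1.1, hx.1.2, hx.2⟩
            · have : k' ≤ ((NhatMinus θ rs j \ W).filter
                  (fun x => (θ j).1 < (θ x).1)).card := by
                simpa [Finset.card, Finset.filter_val] using hcount
              omega
        · exact h5 j (by simpa [hji] using hj) hjF hjv

/-- **Lemma 3.** In the distance-based mechanism with reserve price `vh`,
under truthful reporting exactly `min ℓ k` units are allocated, where
`ℓ = #{i ∈ N̂ : v_i ≥ vh}`. -/
theorem distanceBased_reserve_allocates (k : ℕ) (vh : ℝ≥0) (θ : Profile N)
    (rs : Finset N) :
    ∑ i, (DBMres k vh θ rs).1 i =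
      min ((Nhat θ rs).filter fun i => vh ≤ (θ i).1).card k := by
  have hperm : (prioList θ rs).Perm ((Nhat θ rs).sort (· ≤ ·)) := List.mergeSort_perm _ _
  have hmem : ∀ i, i ∈ prioList θ rs ↔ i ∈ Nhat θ rs := by
    intro i
    rw [hperm.mem_iff, Finset.mem_sort]
  have hnd : (prioList θ rs).Nodup := hperm.nodup_iff.2 (Finset.sort_nodup _ _)
  obtain ⟨F, h1, h2, h3, h4, h5⟩ :=
    runAux_spec k vh θ rs (prioList θ rs) ∅ k hnd (by simp) le_rfl
  have hsum : ∑ i, (DBMres k vh θ rs).1 i = F.card := by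
    unfold DBMres
    rw [← Finset.sum_subset (Finset.subset_univ F) (fun x _ hx => h2 x hx),
      Finset.sum_congr rfl h1]
    simp
  rw [hsum]
  have hsub : F ⊆ (Nhat θ rs).filter fun i => vh ≤ (θ i).1 := by
    intro j hj
    exact Finset.mem_filter.2 ⟨(hmem j).1 (h3 j hj).1, (h3 j hj).2⟩
  have hle := Finset.card_le_card hsub
  by_cases hL : (((Nhat θ rs).filter fun i => vh ≤ (θ i).1).filter (fun i => i ∉ F)).Nonempty
  · obtain ⟨i, hi, hmax⟩ := Finset.exists_max_image _ (fun i => (θ i).1) hL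
    simp only [Finset.mem_filter] at hi hmax
    obtain ⟨W1, S, a1, a2, a3, a4⟩ := h5 i ((hmem i).2 hi.1.1) hi.2 hi.1.2
    have hSF : S ⊆ F := by
      intro j hj
      obtain ⟨b1, b2, b3⟩ := a3 j hj
      by_contra hjF
      exact absurd b3 (not_lt.2 (hmax j ⟨⟨b1, hi.1.2.trans b3.le⟩, hjF⟩))
    have hWF : W1 ⊆ F := by
      intro j hj
      simpa using a2 j hj
    have hdis : Disjoint S W1 := by
      rw [Finset.disjoint_left]
      intro j hj
      exact (a3 j hj).2.1
    have hcard := Finset.card_le_card (Finset.union_subset hSF hWF)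
    rw [Finset.card_union_of_disjoint hdis] at hcard
    simp only [Finset.card_empty] at a4
    omega
  · have hsub' : ((Nhat θ rs).filter fun i => vh ≤ (θ i).1) ⊆ F := by
      intro j hj
      by_contra hjF
      exact hL ⟨j, Finset.mem_filter.2 ⟨hj, hjF⟩⟩
    have := Finset.card_le_card hsub'
    omega

end SNA
end
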